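/- Asymptotically almost all λυ-terms are in lazy substitution form: the proportion of λυ-terms of size n that are strict substitution forms (reachable from some a[b/] with a, b pure via a sequence of υ-rewriting steps with no (Beta) step) tends to 0 as n → ∞. -/

import Mathlib

open Finset Filter

mutual
inductive Tm : Type
  | idx : Nat → Tm
  | lam : Tm → Tm
  | app : Tm → Tm → Tm
  | clos : Tm → Subst → Tm
inductive Subst : Type
  | slash : Tm → Subst
  | lift : Subst → Subst
  | shift : Subst
end

mutual
/-- Natural size of a λυ-term: every constructor weighs 1; index n has size n+1. -/
def Tm.size : Tm → Nat
  | .idx n => n + 1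
  | .lam a => Tm.size a + 1
  | .app a b => Tm.size a + Tm.size b + 1
  | .clos a s => Tm.size a + Subst.size s + 1
/-- Natural size of an explicit substitution. -/
def Subst.size : Subst → Nat
  | .slash a => Tm.size a + 1
  | .lift s => Subst.size s + 1
  | .shift => 1
end

/-- Number of λυ-terms of size `n`. -/
noncomputable def tcount (n : ℕ) : ℕ := Nat.card {a : Tm // Tm.size a = n}

/-- Number of explicit substitutions of size `n`. -/
noncomputable def scount (n : ℕ) : ℕ := Nat.card {s : Subst // Subst.size s = n}

/-- A λυ-term is impure if it contains a closure constructor. -/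
def Tm.impure : Tm → Bool
  | .idx _ => false
  | .lam a => Tm.impure a
  | .app a b => Tm.impure a || Tm.impure b
  | .clos _ _ => true

mutual
/-- One υ-rewriting step on terms (the seven rules except (Beta)), closed under contexts. -/
inductive TStep : Tm → Tm → Prop
  | appRule (a b : Tm) (s : Subst) :
      TStep (.clos (.app a b) s) (.app (.clos a s) (.clos b s))
  | lamRule (a : Tm) (s : Subst) :
      TStep (.clos (.lam a) s) (.lam (.clos a (.lift s)))
  | fvar (a : Tm) : TStep (.clos (.idx 0) (.slash a)) a
  | rvar (n : ℕ) (a : Tm) : TStep (.clos (.idx (n + 1)) (.slash a)) (.idx n)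
  | fvarLift (s : Subst) : TStep (.clos (.idx 0) (.lift s)) (.idx 0)
  | rvarLift (n : ℕ) (s : Subst) :
      TStep (.clos (.idx (n + 1)) (.lift s)) (.clos (.clos (.idx n) s) .shift)
  | varShift (n : ℕ) : TStep (.clos (.idx n) .shift) (.idx (n + 1))
  | lamCong {a a' : Tm} : TStep a a' → TStep (.lam a) (.lam a')
  | appLeft {a a' : Tm} (b : Tm) : TStep a a' → TStep (.app a b) (.app a' b)
  | appRight (a : Tm) {b b' : Tm} : TStep b b' → TStep (.app a b) (.app a b')
  | closLeft {a a' : Tm} (s : Subst) : TStep a a' → TStep (.clos a s) (.clos a' s)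
  | closRight (a : Tm) {s s' : Subst} : SStep s s' → TStep (.clos a s) (.clos a s')
/-- One υ-rewriting step on substitutions, closed under contexts. -/
inductive SStep : Subst → Subst → Prop
  | slashCong {a a' : Tm} : TStep a a' → SStep (.slash a) (.slash a')
  | liftCong {s s' : Subst} : SStep s s' → SStep (.lift s) (.lift s')
end

/-- A λυ-term is in strict substitution form if it is reachable from some a[b/],
with a and b pure, by υ-steps only (no Beta). -/
def StrictForm (t : Tm) : Prop :=
  ∃ a b : Tm, Tm.impure a = false ∧ Tm.impure b = false ∧
    Relation.ReflTransGen TStep (Tm.clos a (Subst.slash b)) t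

/-- Number of strict substitution forms of size n. -/
noncomputable def strictCount (n : ℕ) : ℕ :=
  Nat.card {t : Tm // Tm.size t = n ∧ StrictForm t}

/-!
The generating function `T` of λυ-terms satisfies `T = z (1 + T)²`, so λυ-terms of size `n ≥ 1` are
counted by the Catalan numbers and grow like `4ⁿ` up to a polynomial factor. A υ-step never creates
a slash, and it never changes the content of one as long as that content is pure; hence in a strict
substitution form every `a` occurring in a slash `a/` is pure. This restricts the growth rate: at
some `z > 1/4`, beyond the radius of convergence of `T`, the positive system for the generating
functions of pure terms and of such substitutions and terms has a finite supersolution, which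
dominates them.
-/

open scoped ENNReal NNReal

section GenFun

variable {α β γ : Type*}

/-- The generating function `∑ z ^ |a|` of the class `s` with size function `size`, evaluated at
`z`. Values in `ℝ≥0∞` turn convergence into finiteness. -/
noncomputable def genFun (size : α → ℕ) (z : ℝ≥0∞) (s : Set α) : ℝ≥0∞ :=
  ∑' a : s, z ^ size a

variable {size : α → ℕ} {sizeβ : β → ℕ} {sizeγ : γ → ℕ} {z : ℝ≥0∞}

@[gcongr]
theorem genFun_mono {s t : Set α} (h : s ⊆ t) : genFun size z s ≤ genFun size z t :=
  ENNReal.tsum_mono_subtype (z ^ size ·) h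

theorem genFun_union_le (s t : Set α) :
    genFun size z (s ∪ t) ≤ genFun size z s + genFun size z t :=
  ENNReal.tsum_union_le (z ^ size ·) s t

theorem genFun_singleton (a : α) : genFun size z {a} = z ^ size a :=
  tsum_singleton a (z ^ size ·)

theorem genFun_image_le {f : α → β} (hf : ∀ a, sizeβ (f a) = size a + 1) (s : Set α) :
    genFun sizeβ z (f '' s) ≤ z * genFun size z s :=
  calc genFun sizeβ z (f '' s)
      ≤ ∑' a : s, z ^ sizeβ (f a) :=
        ENNReal.tsum_le_tsum_comp_of_surjective (s.imageFactorization_surjective (f := f))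
          fun b => z ^ sizeβ b
    _ = z * genFun size z s := by
        simp only [genFun, hf, pow_succ', ENNReal.tsum_mul_left]

theorem genFun_prod (s : Set α) (t : Set β) :
    genFun (fun p : α × β => size p.1 + sizeβ p.2) z (s ×ˢ t) =
      genFun size z s * genFun sizeβ z t :=
  calc genFun (fun p : α × β => size p.1 + sizeβ p.2) z (s ×ˢ t)
      = ∑' p : s × t, z ^ size p.1 * z ^ sizeβ p.2 := by
        rw [← (Equiv.Set.prod s t).tsum_eq]
        exact tsum_congr fun p => pow_add z _ _
    _ = genFun size z s * genFun sizeβ z t := by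
        rw [ENNReal.tsum_prod (f := fun (a : s) (b : t) => z ^ size a * z ^ sizeβ b)]
        simp_rw [ENNReal.tsum_mul_left]
        exact ENNReal.tsum_mul_right

theorem genFun_image2_le {f : α → β → γ} (hf : ∀ a b, sizeγ (f a b) = size a + sizeβ b + 1)
    (s : Set α) (t : Set β) :
    genFun sizeγ z (Set.image2 f s t) ≤ z * (genFun size z s * genFun sizeβ z t) := by
  rw [← Set.image_prod, ← genFun_prod]
  exact genFun_image_le (fun ab : α × β => hf ab.1 ab.2) _

-- With `c` a supersolution of the equation for the generating function, this is the comparison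
-- principle: the truncations start at `0` and stay below `c`.
theorem genFun_le_of_truncation {s : Set α} {c : ℝ≥0∞}
    (h : ∀ n, genFun size z {a ∈ s | size a < n} ≤ c →
      genFun size z {a ∈ s | size a < n + 1} ≤ c) :
    genFun size z s ≤ c := by
  have truncation_le (n : ℕ) : genFun size z {a ∈ s | size a < n} ≤ c := by
    induction n with
    | zero => simp [genFun]
    | succ n ih => exact h n ih
  rw [genFun, ENNReal.tsum_eq_iSup_sum]
  refine iSup_le fun F => ?_
  let N := F.sup (fun a : s => size a) + 1
  have size_lt (a : F) : size a.1 < N := Nat.lt_succ_of_le (F.le_sup (f := fun a : s => size a) a.2)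
  calc ∑ a ∈ F, z ^ size a
      = ∑' a : F, z ^ size a.1 := (F.tsum_subtype fun a : s => z ^ size a).symm
    _ ≤ genFun size z {a ∈ s | size a < N} :=
        ENNReal.tsum_comp_le_tsum_of_injective
          (f := fun a : F => (⟨a.1, a.1.2, size_lt a⟩ : {a | a ∈ s ∧ size a < N}))
          (fun a b hab => Subtype.ext (Subtype.ext (Subtype.mk.inj hab))) fun a => z ^ size a.1
    _ ≤ c := truncation_le N

theorem natCard_mul_pow_le_genFun (s : Set α) (n : ℕ) :
    (Nat.card {a // size a = n ∧ a ∈ s} : ℝ≥0∞) * z ^ n ≤ genFun size z s :=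
  calc (Nat.card {a // size a = n ∧ a ∈ s} : ℝ≥0∞) * z ^ n
      ≤ (ENat.card {a // size a = n ∧ a ∈ s} : ℝ≥0∞) * z ^ n := by
        gcongr
        exact ENat.toENNReal_mono (ENat.natCast_toNat_le_self _)
    _ = ∑' _ : {a // size a = n ∧ a ∈ s}, z ^ n := (ENNReal.tsum_const _).symm
    _ = genFun size z {a | size a = n ∧ a ∈ s} := tsum_congr fun a => by rw [a.2.1]
    _ ≤ genFun size z s := genFun_mono fun _ ha => ha.2

end GenFun

namespace Tm

theorem size_lam (a : Tm) : (lam a).size = a.size + 1 := rfl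

theorem size_app (a b : Tm) : (app a b).size = a.size + b.size + 1 := rfl

theorem size_clos (a : Tm) (s : Subst) : (clos a s).size = a.size + s.size + 1 := rfl

end Tm

namespace Subst

theorem size_slash (a : Tm) : (slash a).size = a.size + 1 := rfl

theorem size_lift (s : Subst) : (lift s).size = s.size + 1 := rfl

theorem size_shift : shift.size = 1 := rfl

end Subst

mutual
/-- Every term `a` that occurs in a slash `a/` inside the given term is pure. This is the invariant
that υ-reduction preserves along strict substitution forms. -/
def Tm.HasPureSlashes : Tm → Prop
  | .idx _ => True
  | .lam a => a.HasPureSlashes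
  | .app a b => a.HasPureSlashes ∧ b.HasPureSlashes
  | .clos a s => a.HasPureSlashes ∧ s.HasPureSlashes
/-- The analogue of `Tm.HasPureSlashes` for substitutions. -/
def Subst.HasPureSlashes : Subst → Prop
  | .slash a => a.impure = false
  | .lift s => s.HasPureSlashes
  | .shift => True
end

theorem Tm.hasPureSlashes_of_pure : ∀ {a : Tm}, a.impure = false → a.HasPureSlashes
  | .idx _, _ => trivial
  | .lam a, h => hasPureSlashes_of_pure (a := a) h
  | .app _ _, h =>
    have ⟨ha, hb⟩ := Bool.or_eq_false_iff.1 h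
    ⟨hasPureSlashes_of_pure ha, hasPureSlashes_of_pure hb⟩

theorem TStep.impure_eq_true : ∀ {a a' : Tm}, TStep a a' → a.impure = true
  | _, _, .lamCong h => h.impure_eq_true
  | _, _, .appLeft _ h => Bool.or_eq_true_iff.2 (.inl h.impure_eq_true)
  | _, _, .appRight _ h => Bool.or_eq_true_iff.2 (.inr h.impure_eq_true)
  | .clos _ _, _, _ => rfl

mutual
theorem TStep.hasPureSlashes : ∀ {a a' : Tm}, TStep a a' → a.HasPureSlashes → a'.HasPureSlashes
  | _, _, .appRule _ _ _, ⟨⟨ha, hb⟩, hs⟩ => ⟨⟨ha, hs⟩, hb, hs⟩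
  | _, _, .lamRule _ _, ⟨ha, hs⟩ => ⟨ha, hs⟩
  | _, _, .fvar _, ⟨_, ha⟩ => Tm.hasPureSlashes_of_pure ha
  | _, _, .rvar _ _, _ => trivial
  | _, _, .fvarLift _, _ => trivial
  | _, _, .rvarLift _ _, ⟨_, hs⟩ => ⟨⟨trivial, hs⟩, trivial⟩
  | _, _, .varShift _, _ => trivial
  | _, _, .lamCong h, ha => h.hasPureSlashes ha
  | _, _, .appLeft _ h, ⟨ha, hb⟩ => ⟨h.hasPureSlashes ha, hb⟩
  | _, _, .appRight _ h, ⟨ha, hb⟩ => ⟨ha, h.hasPureSlashes hb⟩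
  | _, _, .closLeft _ h, ⟨ha, hs⟩ => ⟨h.hasPureSlashes ha, hs⟩
  | _, _, .closRight _ h, ⟨ha, hs⟩ => ⟨ha, h.hasPureSlashes hs⟩
theorem SStep.hasPureSlashes :
    ∀ {s s' : Subst}, SStep s s' → s.HasPureSlashes → s'.HasPureSlashes
  | _, _, .slashCong h, ha => absurd h.impure_eq_true (Bool.eq_false_iff.1 ha)
  | _, _, .liftCong h, hs => h.hasPureSlashes hs
end

theorem StrictForm.hasPureSlashes {t : Tm} (h : StrictForm t) : t.HasPureSlashes := by
  obtain ⟨a, b, ha, hb, hsteps⟩ := h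
  induction hsteps with
  | refl => exact ⟨Tm.hasPureSlashes_of_pure ha, hb⟩
  | tail _ hstep ih => exact hstep.hasPureSlashes ih

section Supersolution

variable {z i p s t : ℝ≥0∞}

theorem genFun_range_idx_le (hi : z + z * i ≤ i) : genFun Tm.size z (Set.range Tm.idx) ≤ i := by
  have partial_sum_le (n : ℕ) : ∑ k ∈ Finset.range n, z ^ (k + 1) ≤ i := by
    induction n with
    | zero => simp
    | succ n ih =>
      calc ∑ k ∈ Finset.range (n + 1), z ^ (k + 1)
          = z + z * ∑ k ∈ Finset.range n, z ^ (k + 1) := by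
            rw [Finset.sum_range_succ', Finset.mul_sum, zero_add, pow_one, add_comm]
            simp only [pow_succ' z (_ + 1)]
        _ ≤ z + z * i := by gcongr
        _ ≤ i := hi
  calc genFun Tm.size z (Set.range Tm.idx)
      ≤ ∑' k, z ^ (k + 1) :=
        ENNReal.tsum_le_tsum_comp_of_surjective (Set.rangeFactorization_surjective (f := Tm.idx))
          fun a => z ^ Tm.size a
    _ ≤ i := ENNReal.tsum_le_of_sum_range_le partial_sum_le

theorem genFun_pure_le (hi : z + z * i ≤ i) (hp : i + z * p + z * (p * p) ≤ p) :
    genFun Tm.size z {a | a.impure = false} ≤ p := by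
  refine genFun_le_of_truncation fun n ih => ?_
  set P := {a ∈ {a : Tm | a.impure = false} | a.size < n}
  have truncation_subset : {a ∈ {a : Tm | a.impure = false} | a.size < n + 1} ⊆
      Set.range Tm.idx ∪ Tm.lam '' P ∪ Set.image2 Tm.app P P := by
    rintro (k | a | ⟨a, b⟩ | ⟨a, s⟩) ⟨hpure, hlt⟩ <;>
      simp only [Set.mem_ofPred_eq, Tm.impure, Bool.or_eq_false_iff, Tm.size, reduceCtorEq]
        at hpure hlt
    · exact .inl (.inl ⟨k, rfl⟩)
    · exact .inl (.inr ⟨a, ⟨hpure, by lia⟩, rfl⟩)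
    · exact .inr ⟨a, ⟨hpure.1, by lia⟩, b, ⟨hpure.2, by lia⟩, rfl⟩
  grw [truncation_subset, genFun_union_le, genFun_union_le, genFun_range_idx_le hi,
    genFun_image_le (size := Tm.size) Tm.size_lam, genFun_image2_le Tm.size_app, ih, hp]

theorem genFun_subst_hasPureSlashes_le (hi : z + z * i ≤ i) (hp : i + z * p + z * (p * p) ≤ p)
    (hs : z + z * s + z * p ≤ s) :
    genFun Subst.size z {σ | σ.HasPureSlashes} ≤ s := by
  refine genFun_le_of_truncation fun n ih => ?_
  set P := {a : Tm | a.impure = false}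
  set S := {σ ∈ {σ : Subst | σ.HasPureSlashes} | σ.size < n}
  have truncation_subset : {σ ∈ {σ : Subst | σ.HasPureSlashes} | σ.size < n + 1} ⊆
      {Subst.shift} ∪ Subst.lift '' S ∪ Subst.slash '' P := by
    rintro (a | σ | _) ⟨hpure, hlt⟩
    · exact .inr ⟨a, hpure, rfl⟩
    · exact .inl (.inr ⟨σ, ⟨hpure, Nat.lt_of_succ_lt_succ hlt⟩, rfl⟩)
    · exact .inl (.inl rfl)
  grw [truncation_subset, genFun_union_le, genFun_union_le, genFun_singleton,
    genFun_image_le (size := Subst.size) Subst.size_lift, genFun_image_le Subst.size_slash,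
    genFun_pure_le hi hp, ih, Subst.size_shift, pow_one, hs]

theorem genFun_hasPureSlashes_le (hi : z + z * i ≤ i) (hp : i + z * p + z * (p * p) ≤ p)
    (hs : z + z * s + z * p ≤ s) (ht : i + z * t + z * (t * t) + z * (t * s) ≤ t) :
    genFun Tm.size z {a | a.HasPureSlashes} ≤ t := by
  refine genFun_le_of_truncation fun n ih => ?_
  set T := {a ∈ {a : Tm | a.HasPureSlashes} | a.size < n}
  set S := {σ : Subst | σ.HasPureSlashes}
  have truncation_subset : {a ∈ {a : Tm | a.HasPureSlashes} | a.size < n + 1} ⊆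
      Set.range Tm.idx ∪ Tm.lam '' T ∪ Set.image2 Tm.app T T ∪ Set.image2 Tm.clos T S := by
    rintro (k | a | ⟨a, b⟩ | ⟨a, σ⟩) ⟨hpure, hlt⟩ <;>
      simp only [Set.mem_ofPred_eq, Tm.HasPureSlashes, Tm.size] at hpure hlt
    · exact .inl (.inl (.inl ⟨k, rfl⟩))
    · exact .inl (.inl (.inr ⟨a, ⟨hpure, by lia⟩, rfl⟩))
    · exact .inl (.inr ⟨a, ⟨hpure.1, by lia⟩, b, ⟨hpure.2, by lia⟩, rfl⟩)
    · exact .inr ⟨a, ⟨hpure.1, by lia⟩, σ, hpure.2, rfl⟩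
  grw [truncation_subset, genFun_union_le, genFun_union_le, genFun_union_le,
    genFun_range_idx_le hi, genFun_image_le (size := Tm.size) Tm.size_lam,
    genFun_image2_le Tm.size_app, genFun_image2_le Tm.size_clos,
    genFun_subst_hasPureSlashes_le hi hp hs, ih, ht]

end Supersolution

theorem strictCount_mul_pow_le (n : ℕ) : (strictCount n : ℝ) * (51 / 200) ^ n ≤ 11 / 10 := by
  -- `51 / 200` lies between `1 / 4` and the radius of convergence `≈ 0.2581` of the generating
  -- function of the terms with pure slashes; the other constants lie above the values
  -- `0.342`, `0.571`, `0.538`, `0.912` of the generating functions at that point.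
  have supersolution : genFun Tm.size (51 / 200 : ℝ≥0) {a | a.HasPureSlashes} ≤
      (11 / 10 : ℝ≥0) := by
    apply genFun_hasPureSlashes_le (i := (7 / 20 : ℝ≥0)) (p := (3 / 5 : ℝ≥0))
      (s := (11 / 20 : ℝ≥0)) <;>
      (norm_cast; rw [← NNReal.coe_le_coe]; norm_num)
  have bound : (strictCount n : ℝ≥0∞) * (51 / 200 : ℝ≥0) ^ n ≤ (11 / 10 : ℝ≥0) :=
    calc (strictCount n : ℝ≥0∞) * (51 / 200 : ℝ≥0) ^ n
        ≤ genFun Tm.size (51 / 200 : ℝ≥0) {a | StrictForm a} := natCard_mul_pow_le_genFun _ n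
      _ ≤ genFun Tm.size (51 / 200 : ℝ≥0) {a | a.HasPureSlashes} :=
          genFun_mono fun _ => StrictForm.hasPureSlashes
      _ ≤ (11 / 10 : ℝ≥0) := supersolution
  exact_mod_cast bound

namespace Tm

/-- The size of an optional term; `none` stands for the empty structure of size `0`. -/
def optionSize (o : Option Tm) : ℕ :=
  o.elim 0 Tm.size

/-- The bijection behind the equation `T = z (1 + T)²`; it adds `1` to the size. Turning a term that
stands alone on the right into an index or a closure eliminates the substitutions from the
grammar. -/
def node : Option Tm → Option Tm → Tm
  | none, none => .idx 0
  | some a, none => .lam a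
  | some a, some b => .app a b
  | none, some (.idx n) => .idx (n + 1)
  | none, some (.lam a) => .clos a .shift
  | none, some (.app a b) => .clos a (.slash b)
  | none, some (.clos a s) => .clos a (.lift s)

theorem size_node (l r : Option Tm) : (node l r).size = optionSize l + optionSize r + 1 := by
  rcases l with _ | a <;> rcases r with _ | (_ | _ | _ | _) <;>
    simp only [node, optionSize, Option.elim, Tm.size, Subst.size] <;> lia

theorem node_injective2 : Function.Injective2 node := by
  rintro (_ | a) (_ | a') (_ | (_ | _ | _ | _)) (_ | (_ | _ | _ | _)) h <;>
    simp_all [node]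

theorem exists_node_eq : ∀ a : Tm, ∃ l r, node l r = a
  | .idx 0 => ⟨none, none, rfl⟩
  | .lam a => ⟨some a, none, rfl⟩
  | .app a b => ⟨some a, some b, rfl⟩
  | .idx (n + 1) => ⟨none, some (.idx n), rfl⟩
  | .clos a .shift => ⟨none, some (.lam a), rfl⟩
  | .clos a (.slash b) => ⟨none, some (.app a b), rfl⟩
  | .clos a (.lift s) => ⟨none, some (.clos a s), rfl⟩

/-- The Catalan encoding of λυ-terms, obtained by iterating `Tm.node`; the empty tree stands for the
missing term `none`. -/
def ofTree : BinaryTree Unit → Option Tm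
  | .nil => none
  | .node _ l r => some (node (ofTree l) (ofTree r))

theorem optionSize_ofTree (x : BinaryTree Unit) : optionSize (ofTree x) = x.numNodes := by
  induction x with
  | nil => rfl
  | node _ l r hl hr => rw [BinaryTree.numNodes, ← hl, ← hr, ← size_node]; rfl

theorem ofTree_injective : Function.Injective ofTree := by
  intro x
  induction x with
  | nil => rintro (_ | _) h <;> trivial
  | node _ l r hl hr =>
    rintro (_ | ⟨_, l', r'⟩) h
    · trivial
    · obtain ⟨hl', hr'⟩ := node_injective2 (Option.some.inj h)
      rw [hl hl', hr hr']

theorem ofTree_surjective : Function.Surjective ofTree := by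
  intro o
  induction hn : optionSize o using Nat.strong_induction_on generalizing o with
  | _ n ih =>
    subst hn
    rcases o with _ | a
    · exact ⟨.nil, rfl⟩
    · obtain ⟨l, r, rfl⟩ := exists_node_eq a
      have size_eq : optionSize (some (node l r)) = optionSize l + optionSize r + 1 := size_node l r
      obtain ⟨x, rfl⟩ := ih _ (by lia) l rfl
      obtain ⟨y, rfl⟩ := ih _ (by lia) r rfl
      exact ⟨.node () x y, rfl⟩

theorem ofTree_bijective : Function.Bijective ofTree :=
  ⟨ofTree_injective, ofTree_surjective⟩

end Tm

theorem tcount_eq_catalan {n : ℕ} (hn : n ≠ 0) : tcount n = catalan n :=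
  calc tcount n
      = Nat.card {o : Option Tm // Tm.optionSize o = n} := by
        refine Nat.card_eq_of_bijective (fun a => ⟨some a.1, a.2⟩) ⟨fun a b hab => ?_, ?_⟩
        · simpa [Subtype.ext_iff] using hab
        · rintro ⟨_ | a, ha⟩
          · exact absurd ha.symm hn
          · exact ⟨⟨a, ha⟩, rfl⟩
    _ = Nat.card {x : BinaryTree Unit // x.numNodes = n} :=
        .symm <| Nat.card_congr <|
          (Equiv.ofBijective Tm.ofTree Tm.ofTree_bijective).subtypeEquiv
            fun x => by rw [Equiv.ofBijective_apply, Tm.optionSize_ofTree]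
    _ = (BinaryTree.treesOfNumNodesEq n).card :=
        Nat.subtype_card _ fun _ => BinaryTree.mem_treesOfNumNodesEq
    _ = catalan n := BinaryTree.treesOfNumNodesEq_card_eq_catalan n

theorem four_pow_le_mul_catalan {n : ℕ} (hn : 0 < n) : 4 ^ n ≤ 2 * n * (n + 1) * catalan n :=
  calc 4 ^ n ≤ 2 * n * n.centralBinom := Nat.four_pow_le_two_mul_self_mul_centralBinom n hn
    _ = 2 * n * (n + 1) * catalan n := by rw [← succ_mul_catalan_eq_centralBinom]; ring

theorem tendsto_div_catalan_of_mul_pow_le {c : ℕ → ℝ} {z C : ℝ} (hz : 1 / 4 < z)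
    (hc : ∀ n, 0 ≤ c n) (hbound : ∀ n, c n * z ^ n ≤ C) :
    Tendsto (fun n => c n / catalan n) atTop (nhds 0) := by
  have z_pos : 0 < z := by linarith
  have C_nonneg : 0 ≤ C := (mul_nonneg (hc 0) (pow_nonneg z_pos.le 0)).trans (hbound 0)
  set q := 1 / (4 * z)
  have q_nonneg : 0 ≤ q := by positivity
  have q_lt_one : q < 1 := by rw [div_lt_one] <;> linarith
  have z_mul_q : z * (q * 4) = 1 := by
    simp only [q]
    field_simp
  have majorant_tendsto : Tendsto (fun n : ℕ => 4 * C * ((n : ℝ) ^ 2 * q ^ n)) atTop (nhds 0) := by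
    simpa using (tendsto_pow_const_mul_const_pow_of_lt_one 2 q_nonneg q_lt_one).const_mul (4 * C)
  refine squeeze_zero' (.of_forall fun n => div_nonneg (hc n) (catalan n).cast_nonneg) ?_
    majorant_tendsto
  filter_upwards [eventually_ge_atTop 1] with n hn
  have catalan_lower : (4 : ℝ) ^ n ≤ 2 * n * (n + 1) * catalan n := by
    exact_mod_cast four_pow_le_mul_catalan hn
  have catalan_pos : (0 : ℝ) < catalan n :=
    pos_of_mul_pos_right ((by positivity : (0 : ℝ) < 4 ^ n).trans_le catalan_lower) (by positivity)
  rw [div_le_iff₀ catalan_pos]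
  calc c n = c n * z ^ n * (q ^ n * 4 ^ n) := by
        rw [mul_assoc, ← mul_pow, ← mul_pow, z_mul_q, one_pow, mul_one]
    _ ≤ C * (q ^ n * (2 * n * (n + n) * catalan n)) := by
        have : (1 : ℝ) ≤ n := by exact_mod_cast hn
        grw [hbound, catalan_lower, this]
    _ = 4 * C * (n ^ 2 * q ^ n) * catalan n := by ring

/-- asymptotically almost all λυ-terms are in lazy substitution form. -/
theorem stmt11 :
    Tendsto (fun n : ℕ => (strictCount n : ℝ) / (tcount n : ℝ)) atTop (nhds 0) := by
  refine (tendsto_div_catalan_of_mul_pow_le (by norm_num) (fun n => (strictCount n).cast_nonneg)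
    strictCount_mul_pow_le).congr' ?_
  filter_upwards [eventually_ne_atTop 0] with n hn
  rw [tcount_eq_catalan hn]
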